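/- For h ≥ 1 let n = 2^{h+1} − 1 and let x_h be the sequence of length n defined by x_h[i] = (h − v₂(i))·(n+1) + i, where v₂(i) is the 2-adic valuation of i; the Cartesian tree of x_h is the complete binary tree of height h. Then |NG(x_h)| = 6(2^h − 1) − 2h. -/

import Mathlib

/-- A sequence of length `n`: a function `ℕ → ℤ` injective on positions `1,…,n`. -/
def IsSeq (n : ℕ) (x : ℕ → ℤ) : Prop := Set.InjOn x (Set.Icc 1 n)

/-- Parent-distance table: `fwdPD x i = i - max{ j | 1 ≤ j < i, x j < x i }` if such `j`
exists, `0` otherwise. -/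
def fwdPD (x : ℕ → ℤ) (i : ℕ) : ℕ :=
  if h : ((Finset.Ico 1 i).filter (fun j => x j < x i)).Nonempty then
    i - ((Finset.Ico 1 i).filter (fun j => x j < x i)).max' h
  else 0

/-- Reverse parent-distance table: `revPD n x i = min{ j | i < j ≤ n, x j < x i } - i` if
such `j` exists, `0` otherwise. -/
def revPD (n : ℕ) (x : ℕ → ℤ) (i : ℕ) : ℕ :=
  if h : ((Finset.Ioc i n).filter (fun j => x j < x i)).Nonempty then
    ((Finset.Ioc i n).filter (fun j => x j < x i)).min' h - i
  else 0

/-- The swap `τ(x,i)`: exchanges positions `i` and `i+1`. -/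
def swapSeq (x : ℕ → ℤ) (i : ℕ) : ℕ → ℤ :=
  fun j => if j = i then x (i + 1) else if j = i + 1 then x i else x j

/-- The parent-distance table of a sequence of length `n`, as a function on `Fin n`
(position `k : Fin n` corresponds to index `k+1 ∈ {1,…,n}`). -/
def PDvec (n : ℕ) (x : ℕ → ℤ) : Fin n → ℕ := fun k => fwdPD x (k.1 + 1)

/-- `NGat n x i` is the set of parent-distance tables obtained by a swap at position `i`
(`1 ≤ i ≤ n-1`) from some sequence `z` having the same Cartesian tree (i.e. the same
parent-distance table) as `x`; it is empty for `i` out of range. -/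
def NGat (n : ℕ) (x : ℕ → ℤ) (i : ℕ) : Set (Fin n → ℕ) :=
  {P | 1 ≤ i ∧ i + 1 ≤ n ∧
    ∃ z, IsSeq n z ∧ PDvec n z = PDvec n x ∧ P = PDvec n (swapSeq z i)}

/-- The neighborhood of (the Cartesian tree of) `x` in the swap graph. -/
def NG (n : ℕ) (x : ℕ → ℤ) : Set (Fin n → ℕ) := ⋃ i, NGat n x i

/-- A sequence of length `2^(h+1) - 1` whose Cartesian tree is the complete binary tree
of height `h`: `x_h[i] = (h - v₂(i)) * 2^(h+1) + i`, where `v₂` is the 2-adic valuation. -/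
def compSeq (h : ℕ) : ℕ → ℤ :=
  fun i => ((h - padicValNat 2 i : ℕ) : ℤ) * (2 ^ (h + 1) : ℕ) + (i : ℤ)

/-!
Fix a swap position `i`. For a sequence `z` with the tree of `x`, the table of `τ(z, i)` depends
on `z` only through the nearest position with an entry below the larger of the two swapped values:
on the left of `i` if `z i < z (i + 1)`, and on the right of `i + 1` otherwise. Raising all entries
strictly between two positions that flank them does not change the tree, so this nearest position
can be any `k` such that `k` and `i` (respectively `i + 1` and `k`) flank the entries between them.
Since swaps at different positions never give the same table, `|NG x|` is obtained by counting
flanked intervals. In the complete binary tree, `a < b` flank an interval exactly if `b = a + 2 ^ j`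
with `2 ^ j ∣ a`, which makes `v₂ p + 1` intervals on either side of a position `p`, and the swaps
at `p - 1` and `p`, for `p` even, each contribute this number.
-/

variable {n : ℕ} {x y z w : ℕ → ℤ}

/-- `x i` is a minimum of `x` over the positions `a, …, i`. The tree of `x` is recorded by this
relation, since the parent-distance of `i` says how far to the left `x i` stays a minimum. -/
def MinSince (x : ℕ → ℤ) (a i : ℕ) : Prop := ∀ k, a ≤ k → k < i → x i ≤ x k

theorem minSince_iff_fwdPD {a i : ℕ} (ha : 1 ≤ a) :
    MinSince x a i ↔ fwdPD x i = 0 ∨ i < a + fwdPD x i := by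
  unfold fwdPD
  split_ifs with hne
  · set m := ((Finset.Ico 1 i).filter (fun j => x j < x i)).max' hne
    have hm : (1 ≤ m ∧ m < i) ∧ x m < x i := by
      simpa only [Finset.mem_filter, Finset.mem_Ico] using Finset.max'_mem _ hne
    have hmax : ∀ k, 1 ≤ k → k < i → x k < x i → k ≤ m := fun k hk hki hlt =>
      Finset.le_max' _ _ (by simp only [Finset.mem_filter, Finset.mem_Ico]; omega)
    constructor
    · intro H
      by_contra hcon
      have := H m (by omega) hm.1.2
      omega
    · intro hd k hak hki
      by_contra hlt
      have := hmax k (by omega) hki (by omega)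
      omega
  · refine iff_of_true (fun k hak hki => ?_) (Or.inl rfl)
    by_contra hlt
    exact hne ⟨k, by simp only [Finset.mem_filter, Finset.mem_Ico]; omega⟩

theorem fwdPD_lt {i : ℕ} (hi : 0 < i) : fwdPD x i < i := by
  unfold fwdPD
  split_ifs with hne
  · have := Finset.max'_mem _ hne
    rw [Finset.mem_filter, Finset.mem_Ico] at this
    omega
  · exact hi

theorem fwdPD_eq_iff {i : ℕ} (hi : 0 < i) :
    fwdPD x i = fwdPD y i ↔ ∀ a, 1 ≤ a → (MinSince x a i ↔ MinSince y a i) := by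
  constructor
  · intro h a ha
    rw [minSince_iff_fwdPD ha, minSince_iff_fwdPD ha, h]
  · intro h
    have hx := fwdPD_lt (x := x) hi
    have hy := fwdPD_lt (x := y) hi
    have hax := h (i - fwdPD x i) (by omega)
    have hay := h (i - fwdPD y i) (by omega)
    rw [minSince_iff_fwdPD (by omega), minSince_iff_fwdPD (by omega)] at hax hay
    omega

theorem PDvec_eq_iff :
    PDvec n x = PDvec n y ↔ ∀ a i, 1 ≤ a → i ≤ n → (MinSince x a i ↔ MinSince y a i) := by
  constructor
  · intro h a i ha hi
    rcases i with _ | i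
    · exact iff_of_true (fun _ _ hk => by omega) (fun _ _ hk => by omega)
    · exact (fwdPD_eq_iff i.succ_pos).1 (congrFun h ⟨i, hi⟩) a ha
  · intro h
    funext k
    exact (fwdPD_eq_iff k.1.succ_pos).2 fun a ha => h a _ ha k.2

theorem finite_NGat (n : ℕ) (x : ℕ → ℤ) (i : ℕ) : (NGat n x i).Finite := by
  refine (Set.finite_Iic (fun k : Fin n => k.1 + 1)).subset ?_
  rintro _ ⟨-, -, z, -, -, rfl⟩ k
  exact (fwdPD_lt k.1.succ_pos).le

/-! ### Swaps at different positions -/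

@[simp]
theorem swapSeq_left (z : ℕ → ℤ) (i : ℕ) : swapSeq z i i = z (i + 1) := by
  simp only [swapSeq, if_pos]

@[simp]
theorem swapSeq_right (z : ℕ → ℤ) (i : ℕ) : swapSeq z i (i + 1) = z i := by
  simp only [swapSeq, if_pos, Nat.succ_ne_self, if_false]

theorem swapSeq_of_ne {i k : ℕ} (h : k ≠ i) (h' : k ≠ i + 1) : swapSeq z i k = z k := by
  simp only [swapSeq, if_neg h, if_neg h']

theorem IsSeq.ne (hz : IsSeq n z) {a b : ℕ} (ha : 1 ≤ a) (hab : a < b) (hb : b ≤ n) :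
    z a ≠ z b :=
  fun h => hab.ne (hz ⟨ha, by omega⟩ ⟨by omega, hb⟩ h)

theorem succ_le_iff_of_PDvec_eq (h : PDvec n x = PDvec n y) {i : ℕ} (hi : 1 ≤ i)
    (hin : i + 1 ≤ n) : x (i + 1) ≤ x i ↔ y (i + 1) ≤ y i := by
  have hmin : ∀ v : ℕ → ℤ, MinSince v i (i + 1) ↔ v (i + 1) ≤ v i := fun v =>
    ⟨fun H => H i le_rfl (by omega), fun hle k hk hki => by
      obtain rfl : k = i := by omega
      exact hle⟩
  rw [← hmin, ← hmin, PDvec_eq_iff.1 h i (i + 1) hi hin]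

theorem succ_succ_le_iff_of_PDvec_eq (h : PDvec n x = PDvec n y) {i : ℕ} (hi : 1 ≤ i)
    (hin : i + 2 ≤ n) :
    x (i + 2) ≤ x i ∧ x (i + 2) ≤ x (i + 1) ↔ y (i + 2) ≤ y i ∧ y (i + 2) ≤ y (i + 1) := by
  have hmin : ∀ v : ℕ → ℤ, MinSince v i (i + 2) ↔ v (i + 2) ≤ v i ∧ v (i + 2) ≤ v (i + 1) :=
    fun v => ⟨fun H => ⟨H i le_rfl (by omega), H (i + 1) (by omega) (by omega)⟩,
      fun hle k hk hki => by
        obtain rfl | rfl : k = i ∨ k = i + 1 := by omega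
        exacts [hle.1, hle.2]⟩
  rw [← hmin, ← hmin, PDvec_eq_iff.1 h i (i + 2) hi hin]

-- The table decides whether `z (i + 1) ≤ z i`, whether `z (i + 2) ≤ z (i + 1)`, and whether
-- `z (i + 2)` is the least of the three; no two orders of three values agree in this both before
-- and after the swaps.
theorem PDvec_swapSeq_succ_ne (hz : IsSeq n z) (hw : IsSeq n w) (hzw : PDvec n z = PDvec n w)
    {i : ℕ} (hi : 1 ≤ i) (hin : i + 2 ≤ n) :
    PDvec n (swapSeq z i) ≠ PDvec n (swapSeq w (i + 1)) := by
  intro hs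
  have hz2 : swapSeq z i (i + 2) = z (i + 2) := swapSeq_of_ne (by omega) (by omega)
  have hw0 : swapSeq w (i + 1) i = w i := swapSeq_of_ne (by omega) (by omega)
  have hs01 := succ_le_iff_of_PDvec_eq hs hi (by omega)
  have hs12 : _ ≤ _ ↔ swapSeq w (i + 1) (i + 2) ≤ _ :=
    succ_le_iff_of_PDvec_eq hs (i := i + 1) (by omega) hin
  have hs02 := succ_succ_le_iff_of_PDvec_eq hs hi hin
  have h01 := succ_le_iff_of_PDvec_eq hzw hi (by omega)
  have h12 := succ_le_iff_of_PDvec_eq hzw (i := i + 1) (by omega) hin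
  have h02 := succ_succ_le_iff_of_PDvec_eq hzw hi hin
  simp only [swapSeq_left, swapSeq_right, hz2, hw0] at hs01 hs12 hs02
  have := hz.ne hi (show i < i + 1 by omega) (by omega)
  have := hz.ne (show 1 ≤ i + 1 by omega) (show i + 1 < i + 2 by omega) hin
  have := hz.ne hi (show i < i + 2 by omega) hin
  have := hw.ne hi (show i < i + 1 by omega) (by omega)
  have := hw.ne (show 1 ≤ i + 1 by omega) (show i + 1 < i + 2 by omega) hin
  have := hw.ne hi (show i < i + 2 by omega) hin
  grind

theorem disjoint_NGat_of_lt {i j : ℕ} (hij : i < j) : Disjoint (NGat n x i) (NGat n x j) := by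
  rw [Set.disjoint_left]
  rintro _ ⟨hi, -, z, hz, hzx, rfl⟩ ⟨-, hjn, w, hw, hwx, hs⟩
  have hzw := hzx.trans hwx.symm
  obtain rfl | hj : j = i + 1 ∨ i + 1 < j := by omega
  · exact PDvec_swapSeq_succ_ne hz hw hzw hi hjn hs
  · have horder := succ_le_iff_of_PDvec_eq hzw hi (by omega)
    have hswap := succ_le_iff_of_PDvec_eq hs hi (by omega)
    rw [swapSeq_left, swapSeq_right, swapSeq_of_ne (by omega) (by omega),
      swapSeq_of_ne (by omega) (by omega)] at hswap
    have := hz.ne hi (show i < i + 1 by omega) (by omega)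
    omega

theorem ncard_NG (n : ℕ) (x : ℕ → ℤ) :
    (NG n x).ncard = ∑ i ∈ Finset.Ico 1 n, (NGat n x i).ncard := by
  have hNG : NG n x = ⋃ i ∈ (Finset.Ico 1 n : Set ℕ), NGat n x i := by
    ext P
    simp only [NG, Set.mem_iUnion, Finset.coe_Ico, Set.mem_Ico, exists_prop]
    exact exists_congr fun i => ⟨fun hP => ⟨⟨hP.1, hP.2.1⟩, hP⟩, fun hP => hP.2⟩
  rw [hNG, (Finset.finite_toSet _).ncard_biUnion (fun i _ => finite_NGat n x i)]
  · exact finsum_mem_coe_finset _ _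
  · intro i _ j _ hij
    rcases hij.lt_or_gt with h | h
    exacts [disjoint_NGat_of_lt h, (disjoint_NGat_of_lt h).symm]

/-! ### Flanked intervals -/

/-- Every entry of `z` strictly between the positions `a` and `b` is larger than both `z a` and
`z b`. Positions `0` and `n + 1` are sentinels, regarded as carrying the value `-∞`. -/
def Flanked (n : ℕ) (z : ℕ → ℤ) (a b : ℕ) : Prop :=
  ∀ j, a < j → j < b → (a = 0 ∨ z a < z j) ∧ (n < b ∨ z b < z j)

theorem forall_lt_iff_not_minSince {a b : ℕ} :
    (∀ j, a < j → j < b → z a < z j) ↔ ∀ j, a < j → j < b → ¬ MinSince z a j := by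
  constructor
  · intro h j haj hjb hmin
    exact (h j haj hjb).not_ge (hmin a le_rfl haj)
  · intro h j
    induction j using Nat.strong_induction_on with
    | _ j ih =>
      intro haj hjb
      obtain ⟨k, hak, hkj, hlt⟩ : ∃ k, a ≤ k ∧ k < j ∧ z k < z j := by
        simpa only [MinSince, not_forall, not_le, exists_prop] using h j haj hjb
      rcases hak.eq_or_lt with rfl | hak
      · exact hlt
      · exact (ih k hkj hak (hkj.trans hjb)).trans hlt

theorem IsSeq.forall_lt_iff_minSince (hz : IsSeq n z) {a b : ℕ} (hb : b ≤ n) :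
    (∀ j, a < j → j < b → z b < z j) ↔ MinSince z (a + 1) b :=
  ⟨fun h j haj hjb => (h j haj hjb).le, fun h j haj hjb =>
    (h j haj hjb).lt_of_ne (hz.ne (by omega) hjb hb).symm⟩

theorem IsSeq.flanked_iff (hz : IsSeq n z) {a b : ℕ} :
    Flanked n z a b ↔
      (a = 0 ∨ ∀ j, a < j → j < b → ¬ MinSince z a j) ∧ (n < b ∨ MinSince z (a + 1) b) := by
  rw [← forall_lt_iff_not_minSince]
  constructor
  · intro h
    refine ⟨or_iff_not_imp_left.2 fun ha j haj hjb => (h j haj hjb).1.resolve_left ha,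
      or_iff_not_imp_left.2 fun hb => (hz.forall_lt_iff_minSince (not_lt.1 hb)).1
        fun j haj hjb => (h j haj hjb).2.resolve_left hb⟩
  · rintro ⟨ha, hb⟩ j haj hjb
    refine ⟨ha.imp_right fun ha => ha j haj hjb, or_iff_not_imp_left.2 fun hbn => ?_⟩
    exact (hz.forall_lt_iff_minSince (not_lt.1 hbn)).2 (hb.resolve_left hbn) j haj hjb

theorem flanked_iff_of_PDvec_eq (hz : IsSeq n z) (hx : IsSeq n x) (h : PDvec n z = PDvec n x)
    {a b : ℕ} (hb : b ≤ n + 1) : Flanked n z a b ↔ Flanked n x a b := by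
  rw [PDvec_eq_iff] at h
  rw [hz.flanked_iff, hx.flanked_iff]
  refine and_congr (or_congr_right' fun ha => ?_) (or_congr_right' fun hbn => ?_)
  · exact forall_congr' fun j => forall₂_congr fun _ hjb =>
      not_congr (h a j (Nat.pos_of_ne_zero ha) (by omega))
  · exact h _ _ (by omega) (by omega)

/-- The last position before `i` whose entry in `z` is less than `v`, or `0` if there is none. -/
def prevLower (z : ℕ → ℤ) (i : ℕ) (v : ℤ) : ℕ := Nat.findGreatest (fun k => z k < v) (i - 1)

theorem prevLower_eq_iff {i k : ℕ} {v : ℤ} (hi : 0 < i) :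
    prevLower z i v = k ↔ k < i ∧ (k = 0 ∨ z k < v) ∧ ∀ j, k < j → j < i → v ≤ z j := by
  rw [prevLower, Nat.findGreatest_eq_iff]
  simp only [not_lt, Nat.le_sub_one_iff_lt hi, ← or_iff_not_imp_left, ne_eq]

theorem prevLower_spec {i : ℕ} {v : ℤ} (hi : 0 < i) :
    prevLower z i v < i ∧ (prevLower z i v = 0 ∨ z (prevLower z i v) < v) ∧
      ∀ j, prevLower z i v < j → j < i → v ≤ z j :=
  (prevLower_eq_iff hi).1 rfl

/-- The first position after `i` whose entry in `z` is less than `v`, or `n + 1` if there is none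
among the positions up to `n`. -/
noncomputable def nextLower (n : ℕ) (z : ℕ → ℤ) (i : ℕ) (v : ℤ) : ℕ :=
  sInf {k | i < k ∧ (n < k ∨ z k < v)}

theorem nextLower_spec {i : ℕ} {v : ℤ} :
    i < nextLower n z i v ∧ (n < nextLower n z i v ∨ z (nextLower n z i v) < v) ∧
      ∀ j, i < j → j < nextLower n z i v → j ≤ n ∧ v ≤ z j := by
  have hmem : nextLower n z i v ∈ {k | i < k ∧ (n < k ∨ z k < v)} :=
    Nat.sInf_mem ⟨i + n + 1, by omega, Or.inl (by omega)⟩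
  refine ⟨hmem.1, hmem.2, fun j hij hj => ?_⟩
  have := Nat.notMem_of_lt_sInf hj
  simp only [Set.mem_ofPred_eq] at this
  omega

theorem nextLower_eq_iff {i k : ℕ} {v : ℤ} :
    nextLower n z i v = k ↔
      i < k ∧ (n < k ∨ z k < v) ∧ ∀ j, i < j → j < k → j ≤ n ∧ v ≤ z j := by
  constructor
  · rintro rfl
    exact nextLower_spec
  · rintro ⟨hik, hk, hmin⟩
    obtain ⟨hi, hlow, hmin'⟩ := nextLower_spec (n := n) (z := z) (i := i) (v := v)
    rcases lt_trichotomy (nextLower n z i v) k with h | h | h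
    · have := hmin _ hi h
      omega
    · exact h
    · have := hmin' _ hik h
      omega

/-! ### Tables of sequences swapped at the same position -/

theorem minSince_swapSeq_of_lt {i a b : ℕ} (hb : b < i) :
    MinSince (swapSeq z i) a b ↔ MinSince z a b := by
  refine forall_congr' fun k => forall₂_congr fun _ hkb => ?_
  rw [swapSeq_of_ne (by omega) (by omega), swapSeq_of_ne (by omega) (by omega)]

theorem minSince_swapSeq_of_succ_lt {i a b : ℕ} (ha : a ≠ i + 1) (hb : i + 1 < b) :
    MinSince (swapSeq z i) a b ↔ MinSince z a b := by
  have hyb : swapSeq z i b = z b := swapSeq_of_ne (by omega) (by omega)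
  simp only [MinSince, hyb]
  rcases Nat.lt_or_ge i a with hia | hai
  · refine forall_congr' fun k => forall₂_congr fun hak _ => ?_
    rw [swapSeq_of_ne (by omega) (by omega)]
  · constructor <;> intro h k hak hkb
    · have hi := h i hai (by omega)
      have hi' := h (i + 1) (by omega) hb
      grind [swapSeq]
    · grind [swapSeq]

theorem minSince_swapSeq_left {i a : ℕ} :
    MinSince (swapSeq z i) a i ↔ ∀ k, a ≤ k → k < i → z (i + 1) ≤ z k := by
  refine forall_congr' fun k => forall₂_congr fun _ hki => ?_
  rw [swapSeq_left, swapSeq_of_ne (by omega) (by omega)]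

theorem minSince_swapSeq_right {i a : ℕ} :
    MinSince (swapSeq z i) a (i + 1) ↔ (a ≤ i → z i ≤ z (i + 1)) ∧ MinSince z a i := by
  constructor
  · intro h
    refine ⟨fun hai => ?_, fun k hak hki => ?_⟩
    · simpa only [swapSeq_left, swapSeq_right] using h i hai (by omega)
    · simpa only [swapSeq_right, swapSeq_of_ne hki.ne (show k ≠ i + 1 by omega)]
        using h k hak (by omega)
  · rintro ⟨hle, h⟩ k hak hki
    rw [swapSeq_right]
    rcases (Nat.lt_succ_iff.1 hki).eq_or_lt with rfl | hki
    · rw [swapSeq_left]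
      exact hle hak
    · rw [swapSeq_of_ne hki.ne (by omega)]
      exact h k hak hki

theorem minSince_swapSeq_succ {i b : ℕ} (hb : i + 1 < b) :
    MinSince (swapSeq z i) (i + 1) b ↔ z b ≤ z i ∧ MinSince z (i + 2) b := by
  have hyb : swapSeq z i b = z b := swapSeq_of_ne (by omega) (by omega)
  constructor
  · intro h
    refine ⟨?_, fun k hak hkb => ?_⟩
    · simpa only [hyb, swapSeq_right] using h (i + 1) le_rfl hb
    · simpa only [hyb, swapSeq_of_ne (show k ≠ i by omega) (show k ≠ i + 1 by omega)]
        using h k (by omega) hkb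
  · rintro ⟨hle, h⟩ k hak hkb
    rw [hyb]
    rcases hak.eq_or_lt with rfl | hak
    · rw [swapSeq_right]
      exact hle
    · rw [swapSeq_of_ne (by omega) (by omega)]
      exact h k hak hkb

theorem minSince_swapSeq_left_iff_prevLower_lt {i a : ℕ} (hi : 0 < i) (ha : 0 < a) :
    MinSince (swapSeq z i) a i ↔ prevLower z i (z (i + 1)) < a := by
  obtain ⟨hlt, hlow, hmin⟩ := prevLower_spec (z := z) (v := z (i + 1)) hi
  rw [minSince_swapSeq_left]
  constructor
  · intro h
    by_contra! hle
    exact (hlow.resolve_left (by omega)).not_ge (h _ hle hlt)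
  · exact fun h k hak hki => hmin k (by omega) hki

theorem IsSeq.minSince_swapSeq_succ_iff_nextLower_le (hz : IsSeq n z) {i b : ℕ} (hi : 1 ≤ i)
    (hb : i + 1 < b) (hbn : b ≤ n) :
    MinSince (swapSeq z i) (i + 1) b ↔
      nextLower n z (i + 1) (z i) ≤ b ∧ MinSince z (i + 2) b := by
  obtain ⟨hlt, hlow, hmin⟩ := nextLower_spec (n := n) (z := z) (i := i + 1) (v := z i)
  rw [minSince_swapSeq_succ hb]
  refine and_congr_left fun h => ⟨fun hle => ?_, fun hle => ?_⟩
  · by_contra! hb'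
    exact hz.ne hi (by omega) hbn (hle.antisymm (hmin b hb hb').2).symm
  · have hlow := hlow.resolve_left (by omega)
    rcases hle.eq_or_lt with heq | hlt'
    · exact heq ▸ hlow.le
    · exact (h _ hlt hlt').trans hlow.le

theorem minSince_swapSeq_succ_of_lt {i b : ℕ} (hz : z i < z (i + 1)) (hb : i + 1 < b) :
    MinSince (swapSeq z i) (i + 1) b ↔ MinSince z i b := by
  rw [minSince_swapSeq_succ hb]
  constructor
  · rintro ⟨hle, h⟩ k hik hkb
    obtain rfl | rfl | hk : k = i ∨ k = i + 1 ∨ i + 2 ≤ k := by omega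
    exacts [hle, hle.trans hz.le, h k hk hkb]
  · exact fun h => ⟨h i le_rfl (by omega), fun k hk hkb => h k (by omega) hkb⟩

theorem minSince_swapSeq_left_of_gt {i a : ℕ} (hz : z (i + 1) < z i) :
    MinSince (swapSeq z i) a i ↔ MinSince z a (i + 1) := by
  rw [minSince_swapSeq_left]
  constructor
  · intro h k hak hki
    rcases (Nat.lt_succ_iff.1 hki).eq_or_lt with rfl | hki
    exacts [hz.le, h k hak hki]
  · exact fun h k hak hki => h k hak (by omega)

theorem PDvec_swapSeq_eq_iff_of_lt (h : PDvec n z = PDvec n w) {i : ℕ} (hi : 1 ≤ i)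
    (hin : i + 1 ≤ n) (hzi : z i < z (i + 1)) (hwi : w i < w (i + 1)) :
    PDvec n (swapSeq z i) = PDvec n (swapSeq w i) ↔
      prevLower z i (z (i + 1)) = prevLower w i (w (i + 1)) := by
  have hmin := PDvec_eq_iff.1 h
  rw [PDvec_eq_iff]
  constructor
  · intro hs
    have hlt : ∀ a, 1 ≤ a → (prevLower z i (z (i + 1)) < a ↔ prevLower w i (w (i + 1)) < a) :=
      fun a ha => by
        rw [← minSince_swapSeq_left_iff_prevLower_lt hi ha, hs a i ha (by omega),
          minSince_swapSeq_left_iff_prevLower_lt hi ha]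
    have hz := hlt (prevLower z i (z (i + 1)) + 1) (by omega)
    have hw := hlt (prevLower w i (w (i + 1)) + 1) (by omega)
    omega
  · intro hprev a b ha hb
    obtain hbi | rfl | rfl | hib : b < i ∨ b = i ∨ b = i + 1 ∨ i + 1 < b := by omega
    · rw [minSince_swapSeq_of_lt hbi, minSince_swapSeq_of_lt hbi, hmin a b ha hb]
    · rw [minSince_swapSeq_left_iff_prevLower_lt hi ha, hprev,
        minSince_swapSeq_left_iff_prevLower_lt hi ha]
    · rw [minSince_swapSeq_right, minSince_swapSeq_right, hmin a i ha (by omega)]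
      exact and_congr_left fun _ => iff_of_true (fun _ => hzi.le) (fun _ => hwi.le)
    · rcases eq_or_ne a (i + 1) with rfl | hai
      · rw [minSince_swapSeq_succ_of_lt hzi hib, minSince_swapSeq_succ_of_lt hwi hib,
          hmin i b hi hb]
      · rw [minSince_swapSeq_of_succ_lt hai hib, minSince_swapSeq_of_succ_lt hai hib,
          hmin a b ha hb]

theorem nextLower_le_of_PDvec_swapSeq_eq (hz : IsSeq n z) (hw : IsSeq n w) {i : ℕ} (hi : 1 ≤ i)
    (hs : PDvec n (swapSeq z i) = PDvec n (swapSeq w i)) :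
    nextLower n w (i + 1) (w i) ≤ nextLower n z (i + 1) (z i) := by
  obtain ⟨hlt, hlow, hmin⟩ := nextLower_spec (n := n) (z := z) (i := i + 1) (v := z i)
  set q := nextLower n z (i + 1) (z i) with hq
  by_contra! hqw
  have hqn : q ≤ n := ((nextLower_spec (n := n)).2.2 q hlt hqw).1
  have hqmin : MinSince z (i + 2) q := fun k hk hkq =>
    (hlow.resolve_left hqn.not_gt).le.trans (hmin k hk hkq).2
  have hzq := (hz.minSince_swapSeq_succ_iff_nextLower_le hi hlt hqn).2 ⟨hq.ge, hqmin⟩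
  have hwq := (PDvec_eq_iff.1 hs (i + 1) q (by omega) hqn).1 hzq
  exact hqw.not_ge ((hw.minSince_swapSeq_succ_iff_nextLower_le hi hlt hqn).1 hwq).1

theorem PDvec_swapSeq_eq_iff_of_gt (hz : IsSeq n z) (hw : IsSeq n w) (h : PDvec n z = PDvec n w)
    {i : ℕ} (hi : 1 ≤ i) (hin : i + 1 ≤ n) (hzi : z (i + 1) < z i) (hwi : w (i + 1) < w i) :
    PDvec n (swapSeq z i) = PDvec n (swapSeq w i) ↔
      nextLower n z (i + 1) (z i) = nextLower n w (i + 1) (w i) := by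
  have hmin := PDvec_eq_iff.1 h
  refine ⟨fun hs => (nextLower_le_of_PDvec_swapSeq_eq hw hz hi hs.symm).antisymm
    (nextLower_le_of_PDvec_swapSeq_eq hz hw hi hs), fun hnext => PDvec_eq_iff.2 ?_⟩
  intro a b ha hb
  obtain hbi | rfl | rfl | hib : b < i ∨ b = i ∨ b = i + 1 ∨ i + 1 < b := by omega
  · rw [minSince_swapSeq_of_lt hbi, minSince_swapSeq_of_lt hbi, hmin a b ha hb]
  · rw [minSince_swapSeq_left_of_gt hzi, minSince_swapSeq_left_of_gt hwi, hmin a _ ha hin]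
  · rw [minSince_swapSeq_right, minSince_swapSeq_right, hmin a i ha (by omega)]
    exact and_congr_left fun _ => forall_congr' fun _ => iff_of_false hzi.not_ge hwi.not_ge
  · rcases eq_or_ne a (i + 1) with rfl | hai
    · rw [hz.minSince_swapSeq_succ_iff_nextLower_le hi hib hb, hnext,
        hw.minSince_swapSeq_succ_iff_nextLower_le hi hib hb, hmin _ b (by omega) hb]
    · rw [minSince_swapSeq_of_succ_lt hai hib, minSince_swapSeq_of_succ_lt hai hib,
        hmin a b ha hb]

/-! ### Tables reached by a swap at a given position -/

theorem ncard_image_eq_of_eq_iff {α β γ : Type*} {s : Set α} {f : α → β} {g : α → γ}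
    (h : ∀ a ∈ s, ∀ b ∈ s, f a = f b ↔ g a = g b) : (f '' s).ncard = (g '' s).ncard := by
  choose r hr hfr using fun c (hc : c ∈ f '' s) => hc
  refine Set.ncard_congr (fun c hc => g (r c hc)) (fun c hc => Set.mem_image_of_mem g (hr c hc))
    (fun c d hc hd hg => ?_) ?_
  · rw [← hfr c hc, ← hfr d hd]
    exact (h _ (hr c hc) _ (hr d hd)).2 hg
  · rintro _ ⟨a, ha, rfl⟩
    have hfa := Set.mem_image_of_mem f ha
    exact ⟨f a, hfa, (h _ (hr _ hfa) _ ha).1 (hfr _ hfa)⟩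

/-- The sequence `x` with `M` added to all entries strictly between the positions `a` and `b`. If
`a` and `b` flank the entries in between, then this does not affect the tree of `x`. -/
def raise (x : ℕ → ℤ) (a b : ℕ) (M : ℤ) : ℕ → ℤ := fun j => if a < j ∧ j < b then x j + M else x j

theorem raise_of_mem {a b j : ℕ} {M : ℤ} (haj : a < j) (hjb : j < b) :
    raise x a b M j = x j + M :=
  if_pos ⟨haj, hjb⟩

theorem raise_of_notMem {a b j : ℕ} {M : ℤ} (hj : j ≤ a ∨ b ≤ j) : raise x a b M j = x j :=
  if_neg (by omega)

theorem Flanked.minSince_raise_iff {a b : ℕ} (hab : Flanked n x a b) {M : ℤ} (hM : 0 ≤ M)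
    {p q : ℕ} (hp : 1 ≤ p) (hq : q ≤ n) : MinSince (raise x a b M) p q ↔ MinSince x p q := by
  by_cases hqab : a < q ∧ q < b
  · have hxq := raise_of_mem (x := x) (M := M) hqab.1 hqab.2
    rcases le_or_gt p a with hpa | hap
    · have haq : x a < x q := (hab q hqab.1 hqab.2).1.resolve_left (by omega)
      have hxa : raise x a b M a = x a := raise_of_notMem (Or.inl le_rfl)
      refine iff_of_false (fun h => ?_) (fun h => ?_)
      · have := h a hpa hqab.1
        omega
      · have := h a hpa hqab.1
        omega
    · refine forall_congr' fun k => forall₂_congr fun hpk hkq => ?_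
      rw [hxq, raise_of_mem (by omega) (by omega), add_le_add_iff_right]
  · have hxq : raise x a b M q = x q := raise_of_notMem (by omega)
    constructor
    · intro h k hpk hkq
      by_cases hkab : a < k ∧ k < b
      · have hbk : x b < x k := (hab k hkab.1 hkab.2).2.resolve_left (by omega)
        have hbq : x q ≤ x b := by
          rcases (show b ≤ q by omega).eq_or_lt with rfl | hbq
          · exact le_rfl
          · simpa only [hxq, raise_of_notMem (Or.inr le_rfl)] using h b (by omega) hbq
        exact hbq.trans hbk.le
      · simpa only [hxq, raise_of_notMem (show k ≤ a ∨ b ≤ k by omega)] using h k hpk hkq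
    · intro h k hpk hkq
      have := h k hpk hkq
      rw [hxq, raise]
      split_ifs <;> omega

theorem isSeq_raise (hx : IsSeq n x) {a b : ℕ} {M : ℤ}
    (hM : ∀ j ≤ n, ∀ k ≤ n, x k < x j + M) : IsSeq n (raise x a b M) := by
  intro j hj k hk hjk
  have := hM j hj.2 k hk.2
  have := hM k hk.2 j hj.2
  unfold raise at hjk
  split_ifs at hjk
  · exact hx hj hk (by omega)
  · omega
  · omega
  · exact hx hj hk hjk

theorem exists_raised (hx : IsSeq n x) {a b : ℕ} (hab : Flanked n x a b) (v : ℤ) :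
    ∃ z, IsSeq n z ∧ PDvec n z = PDvec n x ∧ (∀ j, j ≤ a ∨ b ≤ j → z j = x j) ∧
      ∀ j, a < j → j < b → j ≤ n → v < z j := by
  obtain ⟨B, hB⟩ := ((Set.finite_Iic n).image (|x ·|)).bddAbove
  have hB' : ∀ j ≤ n, |x j| ≤ B := fun j hj => hB (Set.mem_image_of_mem _ hj)
  have hB0 : 0 ≤ B := (abs_nonneg _).trans (hB' 0 n.zero_le)
  have hv := le_abs_self v
  have hv0 := abs_nonneg v
  refine ⟨raise x a b (2 * B + |v| + 1), isSeq_raise hx fun j hj k hk => ?_,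
    PDvec_eq_iff.2 fun p q hp hq => hab.minSince_raise_iff (by omega) hp hq,
    fun j hj => raise_of_notMem hj, fun j haj hjb hj => ?_⟩
  · have := abs_le.1 (hB' j hj)
    have := abs_le.1 (hB' k hk)
    omega
  · have := abs_le.1 (hB' j hj)
    rw [raise_of_mem haj hjb]
    omega

theorem flanked_prevLower (hx : IsSeq n x) {p : ℕ} (hp : 1 ≤ p) (hpn : p ≤ n) :
    Flanked n x (prevLower x p (x p)) p := by
  obtain ⟨-, hlow, hmin⟩ := prevLower_spec (z := x) (v := x p) hp
  intro j hj hjp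
  have hlt : x p < x j := (hmin j hj hjp).lt_of_ne (hx.ne (by omega) hjp hpn).symm
  exact ⟨hlow.imp_right fun h => h.trans hlt, Or.inr hlt⟩

theorem flanked_nextLower (hx : IsSeq n x) {p : ℕ} (hp : 1 ≤ p) :
    Flanked n x p (nextLower n x p (x p)) := by
  obtain ⟨-, hlow, hmin⟩ := nextLower_spec (n := n) (z := x) (i := p) (v := x p)
  intro j hpj hj
  have hlt : x p < x j := (hmin j hpj hj).2.lt_of_ne (hx.ne hp hpj (hmin j hpj hj).1)
  exact ⟨Or.inr hlt, hlow.imp_right fun h => h.trans hlt⟩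

/-- The sequences of length `n` with the same tree as `x`; the swaps of `NG` range over these. -/
def treeClass (n : ℕ) (x : ℕ → ℤ) : Set (ℕ → ℤ) := {z | IsSeq n z ∧ PDvec n z = PDvec n x}

theorem NGat_eq_image {i : ℕ} (hi : 1 ≤ i) (hin : i + 1 ≤ n) :
    NGat n x i = (fun z => PDvec n (swapSeq z i)) '' treeClass n x := by
  ext P
  constructor
  · rintro ⟨-, -, z, hz, hzx, rfl⟩
    exact ⟨z, ⟨hz, hzx⟩, rfl⟩
  · rintro ⟨z, ⟨hz, hzx⟩, rfl⟩
    exact ⟨hi, hin, z, hz, hzx, rfl⟩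

theorem lt_succ_of_mem_treeClass (hz : z ∈ treeClass n x) {i : ℕ} (hi : 1 ≤ i)
    (hin : i + 1 ≤ n) (hlt : x i < x (i + 1)) : z i < z (i + 1) :=
  not_le.1 fun h => hlt.not_ge ((succ_le_iff_of_PDvec_eq hz.2 hi hin).1 h)

theorem succ_lt_of_mem_treeClass (hz : z ∈ treeClass n x) {i : ℕ} (hi : 1 ≤ i)
    (hin : i + 1 ≤ n) (hlt : x (i + 1) < x i) : z (i + 1) < z i :=
  ((succ_le_iff_of_PDvec_eq hz.2 hi hin).2 hlt.le).lt_of_ne (hz.1.ne hi i.lt_succ_self hin).symm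

-- To realize `k`, raise the entries to the right of `i` so that the larger swapped value exceeds
-- `x k`, and then raise those between `k` and `i` above that value.
theorem image_prevLower (hx : IsSeq n x) {i : ℕ} (hi : 1 ≤ i) (hin : i + 1 ≤ n)
    (hlt : x i < x (i + 1)) :
    (fun z => prevLower z i (z (i + 1))) '' treeClass n x = {k | k < i ∧ Flanked n x k i} := by
  ext k
  constructor
  · rintro ⟨z, hz, rfl⟩
    have hzlt := lt_succ_of_mem_treeClass hz hi hin hlt
    obtain ⟨hki, hlow, hmin⟩ := prevLower_spec (z := z) (v := z (i + 1)) hi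
    refine ⟨hki, (flanked_iff_of_PDvec_eq hz.1 hx hz.2 (by omega)).1 fun j hkj hji => ?_⟩
    exact ⟨hlow.imp_right fun h => h.trans_le (hmin j hkj hji),
      Or.inr (hzlt.trans_le (hmin j hkj hji))⟩
  · rintro ⟨hki, hflank⟩
    obtain ⟨hie, hlow, -⟩ := nextLower_spec (n := n) (z := x) (i := i) (v := x i)
    have hie : i + 1 < nextLower n x i (x i) := by
      refine lt_of_le_of_ne hie fun h => ?_
      rw [← h] at hlow
      omega
    obtain ⟨w, hw, hwx, hwout, hwin⟩ := exists_raised hx (flanked_nextLower hx hi) (x k)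
    obtain ⟨z, hz, hzw, hzout, hzin⟩ := exists_raised hw
      ((flanked_iff_of_PDvec_eq hw hx hwx (by omega)).2 hflank) (w (i + 1))
    refine ⟨z, ⟨hz, hzw.trans hwx⟩, (prevLower_eq_iff hi).2 ⟨hki, Or.inr ?_, ?_⟩⟩
    · rw [hzout k (Or.inl le_rfl), hzout (i + 1) (Or.inr (by omega)), hwout k (Or.inl hki.le)]
      exact hwin (i + 1) (by omega) hie hin
    · intro j hkj hji
      rw [hzout (i + 1) (Or.inr (by omega))]
      exact (hzin j hkj hji (by omega)).le

theorem image_nextLower (hx : IsSeq n x) {i : ℕ} (hi : 1 ≤ i) (hin : i + 1 ≤ n)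
    (hlt : x (i + 1) < x i) :
    (fun z => nextLower n z (i + 1) (z i)) '' treeClass n x =
      {k | i + 1 < k ∧ k ≤ n + 1 ∧ Flanked n x (i + 1) k} := by
  ext k
  constructor
  · rintro ⟨z, hz, rfl⟩
    have hzlt := succ_lt_of_mem_treeClass hz hi hin hlt
    obtain ⟨hik, hlow, hmin⟩ := nextLower_spec (n := n) (z := z) (i := i + 1) (v := z i)
    have hkn : nextLower n z (i + 1) (z i) ≤ n + 1 := by
      by_contra! h
      have := hmin (n + 1) (by omega) h
      omega
    refine ⟨hik, hkn, (flanked_iff_of_PDvec_eq hz.1 hx hz.2 hkn).1 fun j hij hjk => ?_⟩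
    exact ⟨Or.inr (hzlt.trans_le (hmin j hij hjk).2),
      hlow.imp_right fun h => h.trans_le (hmin j hij hjk).2⟩
  · rintro ⟨hik, hkn, hflank⟩
    obtain ⟨hei, hlow, -⟩ := prevLower_spec (z := x) (v := x (i + 1)) i.succ_pos
    have hei : prevLower x (i + 1) (x (i + 1)) < i := by
      refine lt_of_le_of_ne (Nat.lt_succ_iff.1 hei) fun h => ?_
      rw [h] at hlow
      omega
    obtain ⟨w, hw, hwx, hwout, hwin⟩ := exists_raised hx (flanked_prevLower hx i.succ_pos hin) (x k)
    obtain ⟨z, hz, hzw, hzout, hzin⟩ := exists_raised hw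
      ((flanked_iff_of_PDvec_eq hw hx hwx hkn).2 hflank) (w i)
    refine ⟨z, ⟨hz, hzw.trans hwx⟩, nextLower_eq_iff.2 ⟨hik, Or.inr ?_, ?_⟩⟩
    · rw [hzout k (Or.inr le_rfl), hzout i (Or.inl (by omega)), hwout k (Or.inr hik.le)]
      exact hwin i hei (by omega) (by omega)
    · intro j hij hjk
      rw [hzout i (Or.inl (by omega))]
      exact ⟨by omega, (hzin j hij hjk (by omega)).le⟩

theorem ncard_NGat_of_lt (hx : IsSeq n x) {i : ℕ} (hi : 1 ≤ i) (hin : i + 1 ≤ n)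
    (hlt : x i < x (i + 1)) : (NGat n x i).ncard = {k | k < i ∧ Flanked n x k i}.ncard := by
  rw [← image_prevLower hx hi hin hlt, NGat_eq_image hi hin]
  exact ncard_image_eq_of_eq_iff fun z hz w hw =>
    PDvec_swapSeq_eq_iff_of_lt (hz.2.trans hw.2.symm) hi hin
      (lt_succ_of_mem_treeClass hz hi hin hlt) (lt_succ_of_mem_treeClass hw hi hin hlt)

theorem ncard_NGat_of_gt (hx : IsSeq n x) {i : ℕ} (hi : 1 ≤ i) (hin : i + 1 ≤ n)
    (hlt : x (i + 1) < x i) :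
    (NGat n x i).ncard = {k | i + 1 < k ∧ k ≤ n + 1 ∧ Flanked n x (i + 1) k}.ncard := by
  rw [← image_nextLower hx hi hin hlt, NGat_eq_image hi hin]
  exact ncard_image_eq_of_eq_iff fun z hz w hw =>
    PDvec_swapSeq_eq_iff_of_gt hz.1 hw.1 (hz.2.trans hw.2.symm) hi hin
      (succ_lt_of_mem_treeClass hz hi hin hlt) (succ_lt_of_mem_treeClass hw hi hin hlt)

/-! ### The complete binary tree -/

theorem compSeq_lt_of_dvd {h i a b : ℕ} (ha : 1 ≤ a) (hah : a < 2 ^ (h + 1)) (hia : 2 ^ i ∣ a)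
    (hib : ¬ 2 ^ i ∣ b) : compSeq h a < compSeq h b := by
  have hb : b ≠ 0 := by
    rintro rfl
    exact hib (dvd_zero _)
  have hva : i ≤ padicValNat 2 a := (padicValNat_dvd_iff_le (by omega)).1 hia
  have hvb : padicValNat 2 b < i := not_le.1 fun h => hib ((padicValNat_dvd_iff_le hb).2 h)
  have hvah : padicValNat 2 a < h + 1 := (Nat.pow_lt_pow_iff_right one_lt_two).1
    ((Nat.le_of_dvd ha pow_padicValNat_dvd).trans_lt hah)
  unfold compSeq
  norm_cast
  calc (h - padicValNat 2 a) * 2 ^ (h + 1) + a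
      < (h - padicValNat 2 a + 1) * 2 ^ (h + 1) := by rw [add_one_mul]; omega
    _ ≤ (h - padicValNat 2 b) * 2 ^ (h + 1) := Nat.mul_le_mul_right _ (by omega)
    _ ≤ (h - padicValNat 2 b) * 2 ^ (h + 1) + b := Nat.le_add_right _ _

theorem isSeq_compSeq (h : ℕ) : IsSeq (2 ^ (h + 1) - 1) (compSeq h) := by
  have hmod : ∀ a ∈ Set.Icc 1 (2 ^ (h + 1) - 1), compSeq h a % (2 ^ (h + 1) : ℕ) = a := by
    rintro a ⟨ha, hah⟩
    rw [compSeq, Int.mul_add_emod_self_right, ← Int.natCast_mod, Nat.mod_eq_of_lt (by omega)]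
  intro a ha b hb hab
  exact_mod_cast (hmod a ha).symm.trans (hab ▸ hmod b hb)

theorem pow_succ_dvd_add_pow {i a : ℕ} (ha : 2 ^ i ∣ a) (ha' : ¬ 2 ^ (i + 1) ∣ a) :
    2 ^ (i + 1) ∣ a + 2 ^ i := by
  obtain ⟨c, rfl⟩ := ha
  rw [pow_succ, Nat.mul_dvd_mul_iff_left (by positivity)] at ha'
  rw [← mul_add_one, pow_succ, Nat.mul_dvd_mul_iff_left (by positivity)]
  omega

theorem add_le_of_dvd_of_lt {d a b : ℕ} (ha : d ∣ a) (hb : d ∣ b) (hab : a < b) : a + d ≤ b :=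
  not_lt.1 fun h => hab.not_ge (Nat.le_of_lt_add_of_dvd h hb ha)

theorem pow_dvd_of_flanked_compSeq {h a b m i : ℕ} (hb : b ≤ 2 ^ (h + 1))
    (hab : Flanked (2 ^ (h + 1) - 1) (compSeq h) a b) (ham : a < m) (hmb : m < b)
    (him : 2 ^ i ∣ m) : 2 ^ i ∣ a ∧ 2 ^ i ∣ b := by
  have hm := hab m ham hmb
  constructor
  · by_contra hia
    have := compSeq_lt_of_dvd (h := h) (by omega) (by omega) him hia
    have : a ≠ 0 := by
      rintro rfl
      exact hia (dvd_zero _)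
    omega
  · by_contra hib
    have := compSeq_lt_of_dvd (h := h) (by omega) (by omega) him hib
    have : b ≠ 2 ^ (h + 1) := by
      rintro rfl
      have := (Nat.pow_lt_pow_iff_right one_lt_two).1 ((Nat.le_of_dvd (by omega) him).trans_lt hmb)
      exact hib (pow_dvd_pow 2 this.le)
    omega

theorem flanked_compSeq_iff {h a b : ℕ} (hab : a < b) (hb : b ≤ 2 ^ (h + 1)) :
    Flanked (2 ^ (h + 1) - 1) (compSeq h) a b ↔ ∃ i, 2 ^ i ∣ a ∧ b = a + 2 ^ i := by
  constructor
  · intro hflank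
    have hex : ∃ t, ∀ m, a < m → m < b → ¬ 2 ^ t ∣ m := ⟨b, fun m ham hmb hdvd => by
      have := Nat.le_of_dvd (by omega) hdvd
      have := b.lt_two_pow_self
      omega⟩
    classical
    rcases ht : Nat.find hex with _ | i
    all_goals have hno := ht ▸ Nat.find_spec hex
    · have hba : b ≤ a + 1 := not_lt.1 fun h => hno (a + 1) a.lt_succ_self h (one_dvd _)
      exact ⟨0, one_dvd _, hba.antisymm hab⟩
    · obtain ⟨m, ham, hmb, him⟩ : ∃ m, a < m ∧ m < b ∧ 2 ^ i ∣ m := by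
        simpa only [not_forall, not_not, exists_prop] using
          Nat.find_min hex (ht ▸ Nat.lt_succ_self i)
      obtain ⟨hia, hib⟩ := pow_dvd_of_flanked_compSeq hb hflank ham hmb him
      have ham' := add_le_of_dvd_of_lt hia him ham
      have hmb' := add_le_of_dvd_of_lt him hib hmb
      have hia' : 2 ^ (i + 1) ∣ a := by
        by_contra hna
        exact hno (a + 2 ^ i) (by omega) (by omega) (pow_succ_dvd_add_pow hia hna)
      have hba : b ≤ a + 2 ^ (i + 1) := not_lt.1 fun h =>
        hno (a + 2 ^ (i + 1)) (by omega) h (hia'.add dvd_rfl)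
      exact ⟨i + 1, hia', by omega⟩
  · rintro ⟨i, hia, rfl⟩ j haj hjb
    have hij : ¬ 2 ^ i ∣ j := fun h => by
      have := add_le_of_dvd_of_lt hia h haj
      omega
    refine ⟨or_iff_not_imp_left.2 fun ha => ?_, or_iff_not_imp_left.2 fun hbn => ?_⟩
    · exact compSeq_lt_of_dvd (by omega) (by omega) hia hij
    · exact compSeq_lt_of_dvd (by omega) (by omega) (hia.add dvd_rfl) hij

theorem setOf_flanked_compSeq_left {h p : ℕ} (hp : 1 ≤ p) (hph : p < 2 ^ (h + 1)) :
    {k | k < p ∧ Flanked (2 ^ (h + 1) - 1) (compSeq h) k p} =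
      (fun i => p - 2 ^ i) '' Finset.range (padicValNat 2 p + 1) := by
  ext k
  simp only [Set.mem_ofPred_eq, Set.mem_image, Finset.coe_range, Set.mem_Iio, Nat.lt_succ_iff]
  constructor
  · rintro ⟨hkp, hflank⟩
    obtain ⟨i, hik, rfl⟩ := (flanked_compSeq_iff hkp hph.le).1 hflank
    exact ⟨i, (padicValNat_dvd_iff_le (by omega)).1 (hik.add dvd_rfl), Nat.add_sub_cancel _ _⟩
  · rintro ⟨i, hi, rfl⟩
    have hip : 2 ^ i ∣ p := (padicValNat_dvd_iff_le (by omega)).2 hi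
    have hle := Nat.le_of_dvd hp hip
    have hlt : p - 2 ^ i < p := Nat.sub_lt hp (by positivity)
    exact ⟨hlt, (flanked_compSeq_iff hlt hph.le).2
      ⟨i, Nat.dvd_sub hip dvd_rfl, (Nat.sub_add_cancel hle).symm⟩⟩

theorem setOf_flanked_compSeq_right {h p : ℕ} (hp : 1 ≤ p) (hph : p < 2 ^ (h + 1)) :
    {k | p < k ∧ k ≤ 2 ^ (h + 1) ∧ Flanked (2 ^ (h + 1) - 1) (compSeq h) p k} =
      (fun i => p + 2 ^ i) '' Finset.range (padicValNat 2 p + 1) := by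
  ext k
  simp only [Set.mem_ofPred_eq, Set.mem_image, Finset.coe_range, Set.mem_Iio, Nat.lt_succ_iff]
  constructor
  · rintro ⟨hpk, hkh, hflank⟩
    obtain ⟨i, hip, rfl⟩ := (flanked_compSeq_iff hpk hkh).1 hflank
    exact ⟨i, (padicValNat_dvd_iff_le (by omega)).1 hip, rfl⟩
  · rintro ⟨i, hi, rfl⟩
    have hip : 2 ^ i ∣ p := (padicValNat_dvd_iff_le (by omega)).2 hi
    have hih : i < h + 1 :=
      (Nat.pow_lt_pow_iff_right one_lt_two).1 ((Nat.le_of_dvd hp hip).trans_lt hph)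
    have hle := add_le_of_dvd_of_lt hip (pow_dvd_pow 2 hih.le) hph
    have hlt : p < p + 2 ^ i := Nat.lt_add_of_pos_right (by positivity)
    exact ⟨hlt, hle, (flanked_compSeq_iff hlt hle).2 ⟨i, hip, rfl⟩⟩

theorem ncard_NGat_compSeq_odd {h q : ℕ} (hqh : q + 1 < 2 ^ h) :
    (NGat (2 ^ (h + 1) - 1) (compSeq h) (2 * q + 1)).ncard = padicValNat 2 (2 * (q + 1)) + 1 := by
  have hlt : compSeq h (2 * q + 1 + 1) < compSeq h (2 * q + 1) :=
    compSeq_lt_of_dvd (i := 1) (by omega) (by omega) (by omega) (by omega)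
  rw [ncard_NGat_of_gt (isSeq_compSeq h) (by omega) (by omega) hlt, Nat.sub_add_cancel (by omega),
    setOf_flanked_compSeq_right (by omega) (by omega), Set.ncard_image_of_injective,
    Set.ncard_coe_finset, Finset.card_range]
  · rfl
  · exact (add_right_injective _).comp (Nat.pow_right_injective le_rfl)

theorem ncard_NGat_compSeq_even {h q : ℕ} (hqh : q + 1 < 2 ^ h) :
    (NGat (2 ^ (h + 1) - 1) (compSeq h) (2 * (q + 1))).ncard =
      padicValNat 2 (2 * (q + 1)) + 1 := by
  have hlt : compSeq h (2 * (q + 1)) < compSeq h (2 * (q + 1) + 1) :=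
    compSeq_lt_of_dvd (i := 1) (by omega) (by omega) (by omega) (by omega)
  rw [ncard_NGat_of_lt (isSeq_compSeq h) (by omega) (by omega) hlt,
    setOf_flanked_compSeq_left (by omega) (by omega), Set.InjOn.ncard_image,
    Set.ncard_coe_finset, Finset.card_range]
  have hle : ∀ i ∈ (Finset.range (padicValNat 2 (2 * (q + 1)) + 1) : Set ℕ),
      2 ^ i ≤ 2 * (q + 1) := fun i hi => Nat.le_of_dvd (by omega)
    ((padicValNat_dvd_iff_le (by omega)).2 (Nat.lt_succ_iff.1 (Finset.mem_range.1 hi)))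
  intro i hi j hj hij
  exact Nat.pow_right_injective le_rfl ((tsub_right_inj (hle i hi) (hle j hj)).1 hij)

theorem sum_Ico_one_two_mul_add_one {M : Type*} [AddCommMonoid M] (f : ℕ → M) (m : ℕ) :
    ∑ i ∈ Finset.Ico 1 (2 * m + 1), f i =
      ∑ q ∈ Finset.range m, (f (2 * q + 1) + f (2 * (q + 1))) := by
  induction m with
  | zero => rfl
  | succ m ih =>
    rw [Finset.sum_range_succ, ← ih, show 2 * (m + 1) + 1 = 2 * m + 1 + 1 + 1 by ring,
      Finset.sum_Ico_succ_top (by omega), Finset.sum_Ico_succ_top (by omega), add_assoc]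
    rfl

theorem padicValNat_two_two_mul {q : ℕ} (hq : q ≠ 0) :
    padicValNat 2 (2 * q) = padicValNat 2 q + 1 := by
  rw [padicValNat.mul two_ne_zero hq, padicValNat_self, add_comm]

theorem sum_padicValNat_two (h : ℕ) :
    ∑ q ∈ Finset.range (2 ^ h - 1), padicValNat 2 (q + 1) + (h + 1) = 2 ^ h := by
  induction h with
  | zero => rfl
  | succ h ih =>
    have hsplit : 2 ^ (h + 1) - 1 = 2 * (2 ^ h - 1) + 1 := by omega
    have hterm : ∀ q, padicValNat 2 (2 * q + 1) + padicValNat 2 (2 * (q + 1)) =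
        padicValNat 2 (q + 1) + 1 := fun q => by
      rw [padicValNat.eq_zero_of_not_dvd (by omega), padicValNat_two_two_mul q.succ_ne_zero,
        zero_add]
    have hlast : padicValNat 2 (2 * (2 ^ h - 1) + 1) = 0 :=
      padicValNat.eq_zero_of_not_dvd (by omega)
    rw [Finset.range_eq_Ico, Finset.sum_Ico_add' (padicValNat 2 ·), zero_add, hsplit,
      Finset.sum_Ico_succ_top (by omega), hlast, sum_Ico_one_two_mul_add_one,
      Finset.sum_congr rfl fun q _ => hterm q, Finset.sum_add_distrib,
      Finset.sum_const, Finset.card_range, smul_eq_mul]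
    omega

theorem stmt15 (h : ℕ) (hh : 1 ≤ h) :
    (NG (2 ^ (h + 1) - 1) (compSeq h)).ncard = 6 * (2 ^ h - 1) - 2 * h := by
  have hsum := sum_padicValNat_two h
  have hsplit : 2 ^ (h + 1) - 1 = 2 * (2 ^ h - 1) + 1 := by omega
  have hpair : ∀ q ∈ Finset.range (2 ^ h - 1),
      (NGat (2 ^ (h + 1) - 1) (compSeq h) (2 * q + 1)).ncard +
        (NGat (2 ^ (h + 1) - 1) (compSeq h) (2 * (q + 1))).ncard =
      2 * padicValNat 2 (q + 1) + 4 := fun q hq => by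
    have hq : q + 1 < 2 ^ h := Nat.add_lt_of_lt_sub (Finset.mem_range.1 hq)
    rw [ncard_NGat_compSeq_odd hq, ncard_NGat_compSeq_even hq,
      padicValNat_two_two_mul q.succ_ne_zero]
    ring
  calc (NG (2 ^ (h + 1) - 1) (compSeq h)).ncard
      = ∑ i ∈ Finset.Ico 1 (2 * (2 ^ h - 1) + 1),
          (NGat (2 ^ (h + 1) - 1) (compSeq h) i).ncard := by rw [← hsplit, ncard_NG]
    _ = ∑ q ∈ Finset.range (2 ^ h - 1), (2 * padicValNat 2 (q + 1) + 4) := by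
        rw [sum_Ico_one_two_mul_add_one, Finset.sum_congr rfl hpair]
    _ = 2 * ∑ q ∈ Finset.range (2 ^ h - 1), padicValNat 2 (q + 1) + 4 * (2 ^ h - 1) := by
        rw [Finset.sum_add_distrib, ← Finset.mul_sum, Finset.sum_const, Finset.card_range,
          smul_eq_mul, mul_comm 4]
    _ = 6 * (2 ^ h - 1) - 2 * h := by omega
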